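/- If C is any maximal configuration on the m×n grid with m,n ≥ 2, then: if n ≡ 0 (mod 4) then |C| ≥ mn/2 + 2; if n ≡ 2 (mod 4) then |C| ≥ m(n+2)/2; and if n is odd then |C| ≥ m(n+1)/2 + 1. -/

import Mathlib

/-- The m×n grid of lots: rows 1..m (row m southernmost), columns 1..n. -/
def Grid (m n : ℕ) : Finset (ℕ × ℕ) := Finset.Icc 1 m ×ˢ Finset.Icc 1 n

/-- A house at `p` is blocked from sunlight if the lots immediately to its
east `(p.1, p.2+1)`, west `(p.1, p.2-1)` and south `(p.1+1, p.2)` are all occupied.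
(For configurations contained in the grid, membership in `C` automatically forces
these lots to lie in the grid; truncated subtraction sends column 1's western
neighbour to column 0, which is outside the grid.) -/
def Blocked (C : Finset (ℕ × ℕ)) (p : ℕ × ℕ) : Prop :=
  (p.1, p.2 + 1) ∈ C ∧ (p.1, p.2 - 1) ∈ C ∧ (p.1 + 1, p.2) ∈ C

/-- A configuration on the m×n grid is permissible if it lies in the grid and
no house in it is blocked from sunlight. -/
def Permissible (m n : ℕ) (C : Finset (ℕ × ℕ)) : Prop :=
  C ⊆ Grid m n ∧ ∀ p ∈ C, ¬ Blocked C p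

/-- A configuration is maximal if it is permissible and no permissible
configuration strictly contains it. -/
def MaximalConfig (m n : ℕ) (C : Finset (ℕ × ℕ)) : Prop :=
  Permissible m n C ∧ ∀ D : Finset (ℕ × ℕ), Permissible m n D → C ⊆ D → D = C

/-!
A house with occupied neighbours to its east and west *shades* the lot to its south, which then has
to stay empty. Give a house the weight `1` and an empty lot the weight `-1`, except that a shaded
lot and a house shading another lot get the weight `0`. Then the weight of a row is twice its number
of houses, minus `n`, plus the number of its shaded lots, minus the number of lots it shades to its
south, and the last two terms telescope when the rows are added up.

By maximality every unshaded empty lot is needed to keep some house sunny, which severely restricts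
the neighbourhood of an empty lot: the weight between two marked (shaded or shading) lots is
nonnegative, and a row without marked lots has weight at least `1 - Re (i ^ n)`. A row with marked
lots satisfies the same estimate up to corrections at the two borders. These depend only on the
outermost shaded lots of the row and of the row to its south, so they telescope as well. Finally the
last two rows are treated separately: they have at least `n + 2` houses, as every lot of the last
row is occupied or shaded and the outermost houses of the penultimate row do not shade anything.
-/

namespace SunlitGrid

open Set

section Rows

/-- The houses of a row whose eastern and western neighbours are both occupied: they are the ones
that force the lot to their south to stay empty. -/
def middles (x : Set ℤ) : Set ℤ := {k | k - 1 ∈ x ∧ k ∈ x ∧ k + 1 ∈ x}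

/-- A row `x` of length `n` of a maximal configuration, seen between its neighbours: `y` is the row
to its south, and `N` is the set of *shaded* lots, those which must stay empty because of the house
to their north, that is, the `middles` of the row to the north. -/
structure MaximalRow (n : ℤ) (x y N : Set ℤ) : Prop where
  subset_Icc : x ⊆ Icc 1 n
  shaded_subset_Ioo : N ⊆ Ioo 1 n
  disjoint : Disjoint x N
  empty_lot : ∀ k ∈ Icc 1 n, k ∉ x → k ∉ N →
    (k - 1 ∈ x ∧ k + 1 ∈ x ∧ k ∈ y) ∨ (k - 2 ∈ x ∧ k - 1 ∈ x ∧ k - 1 ∈ y) ∨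
      (k + 2 ∈ x ∧ k + 1 ∈ x ∧ k + 1 ∈ y)

/-- The lots of a row that take part in a shading: they are shaded or shade the lot to their
south. -/
def marks (x N : Set ℤ) : Set ℤ := N ∪ middles x

open Classical in
/-- The balance of houses against empty lots, in which marked lots do not count. -/
noncomputable def weight (x N : Set ℤ) (k : ℤ) : ℤ :=
  if k ∈ marks x N then 0 else if k ∈ x then 1 else -1

/-- The real part of `i ^ k`, by which the residue of a length modulo `4` enters the estimates. -/
def phase (k : ℤ) : ℤ := if k % 4 = 0 then 1 else if k % 4 = 2 then -1 else 0

/-- The reflection of a row of length `n`. -/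
def mirror (n : ℤ) (x : Set ℤ) : Set ℤ := {k | n + 1 - k ∈ x}

variable {n : ℤ} {x y N : Set ℤ}

section Phase

theorem phase_of_emod_four_eq_zero {k : ℤ} (hk : k % 4 = 0) : phase k = 1 := if_pos hk

theorem phase_of_emod_four_eq_two {k : ℤ} (hk : k % 4 = 2) : phase k = -1 := by simp [phase, hk]

theorem phase_of_emod_two_eq_one {k : ℤ} (hk : k % 2 = 1) : phase k = 0 := by
  unfold phase; grind

theorem phase_add_two (k : ℤ) : phase (k + 2) = -phase k := by
  unfold phase; grind

theorem abs_phase_sub_one_add_abs_phase (k : ℤ) : |phase (k - 1)| + |phase k| = 1 := by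
  unfold phase; grind

theorem abs_phase_le_one (k : ℤ) : |phase k| ≤ 1 := by
  unfold phase; grind

theorem neg_one_sub_phase_le_sub_min (n b u : ℤ) :
    -1 - phase n ≤ 1 + phase (u - b) + min 0 (phase (n - b)) - min 0 (phase u) := by
  unfold phase; grind

theorem neg_one_sub_phase_le_sub_max (n b u : ℤ) :
    -1 - phase n ≤ 1 + |phase (u - b)| + min 0 (phase (n - b)) - max 0 (phase u) := by
  unfold phase; grind

theorem even_add_one_sub_phase (n : ℤ) : Even (n + 1 - phase n) := by
  rw [Int.even_iff]
  unfold phase; grind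

end Phase

section Sums

theorem sub_le_sum_Ioc {f w : ℤ → ℤ} {a b : ℤ} (hab : a ≤ b)
    (h : ∀ k, a ≤ k → k < b → f (k + 1) - f k ≤ w (k + 1)) :
    f b - f a ≤ ∑ k ∈ Finset.Ioc a b, w k := by
  induction b, hab using Int.leInduction with
  | base => simp
  | succ b hab ih =>
    have hstep := h b hab (lt_add_one b)
    have hprev := ih fun k hak hkb ↦ h k hak (hkb.trans (lt_add_one b))
    rw [← Finset.insert_Ioc_right_eq_Ioc_add_one hab, Finset.sum_insert (by simp)]
    linarith

theorem sum_Ioc_add_sum_Ioc (w : ℤ → ℤ) {a b c : ℤ} (hab : a ≤ b) (hbc : b ≤ c) :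
    ∑ k ∈ Finset.Ioc a b, w k + ∑ k ∈ Finset.Ioc b c, w k = ∑ k ∈ Finset.Ioc a c, w k := by
  rw [← Finset.sum_union (Finset.Ioc_disjoint_Ioc_of_le le_rfl),
    Finset.Ioc_union_Ioc_eq_Ioc hab hbc]

theorem sum_Ioc_reflect (w : ℤ → ℤ) (n a b : ℤ) :
    ∑ k ∈ Finset.Ioc a b, w (n + 1 - k) = ∑ k ∈ Finset.Ioc (n - b) (n - a), w k :=
  Finset.sum_bij' (fun k _ ↦ n + 1 - k) (fun k _ ↦ n + 1 - k) (by simp only [Finset.mem_Ioc]; lia)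
    (by simp only [Finset.mem_Ioc]; lia) (by simp) (by simp) (by simp)

end Sums

theorem weight_of_mem_marks {k : ℤ} (hk : k ∈ marks x N) : weight x N k = 0 := if_pos hk

theorem sum_weight_sub_one {a c : ℤ} (hc : c ∈ marks x N) (hac : a < c) :
    ∑ k ∈ Finset.Ioc a (c - 1), weight x N k = ∑ k ∈ Finset.Ioc a c, weight x N k := by
  have hlast : ∑ k ∈ Finset.Ioc (c - 1) c, weight x N k = 0 := by
    rw [Finset.sum_eq_zero]
    intro k hk
    obtain rfl : k = c := by
      rw [Finset.mem_Ioc] at hk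
      lia
    exact weight_of_mem_marks hc
  rw [← sum_Ioc_add_sum_Ioc _ (Int.le_sub_one_of_lt hac) (sub_one_lt c).le, hlast, add_zero]

namespace MaximalRow

theorem notMem_of_mem_shaded (h : MaximalRow n x y N) {k : ℤ} (hk : k ∈ N) : k ∉ x :=
  fun hx ↦ disjoint_left.1 h.disjoint hx hk

theorem middles_subset_Ioo (h : MaximalRow n x y N) : middles x ⊆ Ioo 1 n := fun k hk ↦ by
  have := h.subset_Icc hk.1
  have := h.subset_Icc hk.2.2
  simp only [mem_Icc, mem_Ioo] at *
  lia

theorem marks_subset_Ioo (h : MaximalRow n x y N) : marks x N ⊆ Ioo 1 n :=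
  union_subset h.shaded_subset_Ioo h.middles_subset_Ioo

theorem bddBelow_shaded (h : MaximalRow n x y N) : BddBelow N :=
  bddBelow_Ioo.mono h.shaded_subset_Ioo

theorem bddAbove_shaded (h : MaximalRow n x y N) : BddAbove N :=
  bddAbove_Ioo.mono h.shaded_subset_Ioo

theorem bddBelow_middles (h : MaximalRow n x y N) : BddBelow (middles x) :=
  bddBelow_Ioo.mono h.middles_subset_Ioo

theorem bddAbove_middles (h : MaximalRow n x y N) : BddAbove (middles x) :=
  bddAbove_Ioo.mono h.middles_subset_Ioo

theorem notMem_zero (h : MaximalRow n x y N) : 0 ∉ x := fun hx ↦ by simpa using (h.subset_Icc hx).1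

end MaximalRow

section LocalFloor

open Classical in
/-- A lower bound, readable off the lots near `k`, for the sum of the weights up to `k` from any
marked lot on. -/
noncomputable def localFloor (x y N : Set ℤ) (k : ℤ) : ℤ :=
  if k ∈ x then
    if k ∈ middles x ∨ (k - 1 ∉ x ∧ k + 1 ∈ x ∧ k ∈ y) then 0 else 1
  else if k ∈ N ∨ k - 1 ∈ x then 0 else -1

namespace MaximalRow

theorem localFloor_add_one_sub_le (h : MaximalRow n x y N) {k : ℤ} (hk : 1 ≤ k) (hkn : k < n) :
    localFloor x y N (k + 1) - localFloor x y N k ≤ weight x N (k + 1) := by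
  have hempty := h.empty_lot k ⟨hk, hkn.le⟩
  have hempty' := h.empty_lot (k + 1) ⟨by lia, hkn⟩
  have hN := @h.notMem_of_mem_shaded
  simp only [localFloor, weight, marks, middles, mem_union, mem_ofPred_eq, add_sub_cancel_right,
    show k + 1 - 2 = k - 1 by ring, show k + 1 + 1 = k + 2 by ring] at hempty' ⊢
  grind

theorem localFloor_of_mem_marks (h : MaximalRow n x y N) {k : ℤ} (hk : k ∈ marks x N) :
    localFloor x y N k = 0 := by
  rcases hk with hk | hk
  · simp [localFloor, h.notMem_of_mem_shaded hk, hk]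
  · simp [localFloor, hk, hk.2.1]

theorem localFloor_le_sum_weight (h : MaximalRow n x y N) {i k : ℤ} (hi : i ∈ marks x N)
    (hik : i ≤ k) (hkn : k ≤ n) :
    localFloor x y N k ≤ ∑ j ∈ Finset.Ioc i k, weight x N j := by
  have hi₁ := (h.marks_subset_Ioo hi).1
  have hsum := sub_le_sum_Ioc hik fun j hij hjk ↦
    h.localFloor_add_one_sub_le (hi₁.le.trans hij) (hjk.trans_le hkn)
  rwa [h.localFloor_of_mem_marks hi, sub_zero] at hsum

theorem sum_weight_nonneg (h : MaximalRow n x y N) {i k : ℤ} (hi : i ∈ marks x N)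
    (hk : k ∈ marks x N) (hik : i ≤ k) : 0 ≤ ∑ j ∈ Finset.Ioc i k, weight x N j :=
  h.localFloor_of_mem_marks hk ▸ h.localFloor_le_sum_weight hi hik (h.marks_subset_Ioo hk).2.le

end MaximalRow

end LocalFloor

section PhasedFloor

open Classical in
/-- A lower bound, readable off the lots near `k` and the distance from `i` to `k` modulo `4`, for
the sum of the weights from an empty lot `i` up to `k`, as long as no lot in between is marked. -/
noncomputable def phasedFloor (x y : Set ℤ) (i k : ℤ) : ℤ :=
  -- The cheapest unmarked rows repeat the pattern empty, house, house, empty: hence the period `4`.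
  if k ∈ x then
    if k - 1 ∈ x then 2 + phase (k - i - 1)
    else if k + 1 ∈ x ∧ k ∈ y then 1 + phase (k - i)
    else 1 + |phase (k - i)|
  else if k - 1 ∉ x then -phase (k - i - 1)
  else if k + 1 ∈ x then |phase (k - i - 1)|
  else 1 - phase (k - i)

theorem phasedFloor_self {i : ℤ} (hi : i ∉ x) : phasedFloor x y i i = 0 := by
  simp [phasedFloor, hi, phase]

namespace MaximalRow

theorem phasedFloor_add_one_sub_le (h : MaximalRow n x y N) {i k : ℤ} (hi : 0 ≤ i) (hix : i ∉ x)
    (hik : i ≤ k) (hkn : k < n) (hk : i < k → k ∉ marks x N) (hk' : k + 1 ∉ marks x N) :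
    phasedFloor x y i (k + 1) - phasedFloor x y i k ≤ weight x N (k + 1) := by
  have hempty : i < k → k ∉ x → k ∉ N → _ := fun hlt ↦ h.empty_lot k ⟨by lia, hkn.le⟩
  have hempty' := h.empty_lot (k + 1) ⟨by lia, hkn⟩
  have hstart : k = i → phase (k - i) = 1 := by rintro rfl; simp [phase]
  have hshift : phase (k + 1 - i) = -phase (k - i - 1) := by
    rw [← phase_add_two]; congr 1; ring
  have habs := abs_phase_sub_one_add_abs_phase (k - i)
  rw [weight, if_neg hk']
  simp only [phasedFloor, show k + 1 - i - 1 = k - i by ring, hshift, abs_neg]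
  simp only [marks, middles, mem_union, mem_ofPred_eq, add_sub_cancel_right,
    show k + 1 - 2 = k - 1 by ring, show k + 1 + 1 = k + 2 by ring] at hempty hempty' hk hk' ⊢
  grind

theorem phasedFloor_le_sum_weight (h : MaximalRow n x y N) {i k : ℤ} (hi : 0 ≤ i) (hix : i ∉ x)
    (hik : i ≤ k) (hkn : k ≤ n) (hmarks : ∀ j ∈ Ioc i k, j ∉ marks x N) :
    phasedFloor x y i k ≤ ∑ j ∈ Finset.Ioc i k, weight x N j := by
  have hsum := sub_le_sum_Ioc hik fun j hij hjk ↦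
    h.phasedFloor_add_one_sub_le hi hix hij (hjk.trans_le hkn)
      (fun hlt ↦ hmarks j ⟨hlt, hjk.le⟩) (hmarks (j + 1) ⟨Int.lt_add_one_of_le hij, hjk⟩)
  rwa [phasedFloor_self hix, sub_zero] at hsum

theorem one_sub_phase_le_sum_weight (h : MaximalRow n x y N) (hn : 0 ≤ n)
    (hmarks : marks x N = ∅) : 1 - phase n ≤ ∑ j ∈ Finset.Ioc 0 n, weight x N j := by
  have hfloor := h.phasedFloor_le_sum_weight le_rfl h.notMem_zero hn le_rfl (by simp [hmarks])
  have hlast : n + 1 ∉ x := fun hx ↦ by simpa using (h.subset_Icc hx).2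
  have hlast' : n + 2 ∉ x := fun hx ↦ by simpa using (h.subset_Icc hx).2
  have hmid : n ∉ marks x N := by simp [hmarks]
  have hempty := h.empty_lot n
  have hstart : phase 0 = 1 := rfl
  have habs := abs_phase_sub_one_add_abs_phase n
  simp only [phasedFloor, marks, mem_union, mem_Icc, sub_zero] at hempty hmid hfloor
  grind

end MaximalRow

end PhasedFloor

section Edges

open Classical in
/-- The weight which a row `z` with westernmost shaded lot `k` receives from the row to its north
at the western border. -/
noncomputable def edgeTerm (z : Set ℤ) (k : ℤ) : ℤ :=
  if k - 1 ∈ z then min 0 (phase (k - 1)) else max 0 (phase (k - 1))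

theorem min_zero_phase_le_edgeTerm (z : Set ℤ) (k : ℤ) : min 0 (phase (k - 1)) ≤ edgeTerm z k := by
  unfold edgeTerm
  grind

theorem abs_edgeTerm_le_one (z : Set ℤ) (k : ℤ) : |edgeTerm z k| ≤ 1 := by
  have := abs_phase_le_one (k - 1)
  unfold edgeTerm
  grind

namespace MaximalRow

theorem one_le_sum_add_edgeTerm (h : MaximalRow n x y N) {c : ℤ} (hc : c ∈ N)
    (hfirst : ∀ j ∈ Ioo 0 c, j ∉ marks x N) :
    1 ≤ ∑ j ∈ Finset.Ioc 0 c, weight x N j + edgeTerm x c := by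
  obtain ⟨hc₁, hcn⟩ := h.shaded_subset_Ioo hc
  have hfloor := h.phasedFloor_le_sum_weight (k := c - 1) le_rfl h.notMem_zero (by lia) (by lia)
    fun j hj ↦ hfirst j ⟨hj.1, Int.lt_of_le_sub_one hj.2⟩
  rw [sum_weight_sub_one (.inl hc) (by lia)] at hfloor
  have hcx := h.notMem_of_mem_shaded hc
  have hempty := h.empty_lot (c - 1) ⟨by lia, by lia⟩
  have hmark := hfirst (c - 1) ⟨by lia, by lia⟩
  have := abs_phase_sub_one_add_abs_phase (c - 1)
  simp only [phasedFloor, edgeTerm, marks, mem_union, sub_zero] at hfloor hmark ⊢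
  grind

theorem one_le_sum_sub_edgeTerm (h : MaximalRow n x y N) {c : ℤ} (hc : c ∈ middles x)
    (hfirst : ∀ j ∈ Ioo 0 c, j ∉ marks x N) :
    1 ≤ ∑ j ∈ Finset.Ioc 0 c, weight x N j - edgeTerm y c := by
  obtain ⟨hc₁, hcn⟩ := h.middles_subset_Ioo hc
  have hfloor := h.phasedFloor_le_sum_weight (k := c - 1) le_rfl h.notMem_zero (by lia) (by lia)
    fun j hj ↦ hfirst j ⟨hj.1, Int.lt_of_le_sub_one hj.2⟩
  rw [sum_weight_sub_one (.inr hc) (by lia)] at hfloor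
  obtain ⟨hcw, hcx, -⟩ := hc
  have hmark := hfirst (c - 1) ⟨by lia, by lia⟩
  simp only [phasedFloor, edgeTerm, marks, middles, mem_union, mem_ofPred_eq, sub_zero]
    at hfloor hmark ⊢
  grind

theorem sum_add_edgeTerm_nonneg (h : MaximalRow n x y N) {i c : ℤ} (hi : i ∈ marks x N)
    (hc : c ∈ N) (hic : i < c) :
    0 ≤ ∑ j ∈ Finset.Ioc i c, weight x N j + edgeTerm x c := by
  obtain ⟨hc₁, hcn⟩ := h.shaded_subset_Ioo hc
  have hfloor := h.localFloor_le_sum_weight (k := c - 1) hi (by lia) (by lia)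
  rw [sum_weight_sub_one (.inl hc) hic] at hfloor
  have hcx := h.notMem_of_mem_shaded hc
  have hempty := h.empty_lot (c - 1) ⟨by lia, by lia⟩
  have := abs_le.1 (abs_phase_le_one (c - 1))
  simp only [localFloor, edgeTerm, middles, mem_ofPred_eq] at hfloor ⊢
  grind

theorem sum_sub_edgeTerm_nonneg (h : MaximalRow n x y N) {i c : ℤ} (hi : i ∈ marks x N)
    (hc : c ∈ middles x) (hic : i < c) (hfirst : c - 1 ∉ middles x) :
    0 ≤ ∑ j ∈ Finset.Ioc i c, weight x N j - edgeTerm y c := by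
  have hcn := (h.middles_subset_Ioo hc).2
  have hfloor := h.localFloor_le_sum_weight (k := c - 1) hi (by lia) (by lia)
  rw [sum_weight_sub_one (.inr hc) hic] at hfloor
  obtain ⟨hcw, hcx, -⟩ := hc
  have := abs_le.1 (abs_phase_le_one (c - 1))
  simp only [localFloor, edgeTerm, middles, mem_ofPred_eq] at hfloor hfirst ⊢
  grind

end MaximalRow

open Classical in
/-- The weight which a row `z` with set of shaded lots `M` receives from the row to its north at the
western border. -/
noncomputable def leftPotential (M z : Set ℤ) : ℤ :=
  if M.Nonempty then edgeTerm z (sInf M) else 0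

theorem leftPotential_empty (z : Set ℤ) : leftPotential ∅ z = 0 := by simp [leftPotential]

theorem leftPotential_of_isLeast {M z : Set ℤ} {a : ℤ} (ha : IsLeast M a) :
    leftPotential M z = edgeTerm z a := by
  rw [leftPotential, if_pos ha.nonempty, ha.csInf_eq]

theorem isLeast_inter_Iic {M : Set ℤ} {a c : ℤ} (ha : IsLeast M a) (hac : a ≤ c) :
    IsLeast (M ∩ Iic c) a :=
  ⟨⟨ha.1, hac⟩, fun _ hb ↦ ha.2 hb.1⟩

theorem abs_leftPotential_le_one (M z : Set ℤ) : |leftPotential M z| ≤ 1 := by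
  unfold leftPotential
  split_ifs
  · exact abs_edgeTerm_le_one z _
  · simp

namespace MaximalRow

theorem sum_add_leftPotential_nonneg (h : MaximalRow n x y N) {i c : ℤ} (hi : i ∈ marks x N)
    (hc : c ∈ marks x N) (hic : i ≤ c) (hlt : ∀ k ∈ N, i < k) :
    0 ≤ ∑ j ∈ Finset.Ioc i c, weight x N j + leftPotential (N ∩ Iic c) x := by
  rcases (N ∩ Iic c).eq_empty_or_nonempty with hN | hN
  · simpa [hN, leftPotential_empty] using h.sum_weight_nonneg hi hc hic
  · obtain ⟨a, ha⟩ := (h.bddBelow_shaded.mono inter_subset_left).exists_isLeast_of_nonempty hN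
    obtain ⟨haN, hac⟩ := ha.1
    have hstart := h.sum_add_edgeTerm_nonneg hi haN (hlt a haN)
    have hrest := h.sum_weight_nonneg (.inl haN) hc hac
    rw [leftPotential_of_isLeast ha, ← sum_Ioc_add_sum_Ioc _ (hlt a haN).le hac]
    linarith

theorem sum_sub_leftPotential_nonneg (h : MaximalRow n x y N) {i c : ℤ} (hi : i ∈ marks x N)
    (hc : c ∈ marks x N) (hic : i ≤ c) (hlt : ∀ k ∈ middles x, i < k) :
    0 ≤ ∑ j ∈ Finset.Ioc i c, weight x N j - leftPotential (middles x ∩ Iic c) y := by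
  rcases (middles x ∩ Iic c).eq_empty_or_nonempty with hT | hT
  · simpa [hT, leftPotential_empty] using h.sum_weight_nonneg hi hc hic
  · obtain ⟨a, ha⟩ := (h.bddBelow_middles.mono inter_subset_left).exists_isLeast_of_nonempty hT
    obtain ⟨haT, hac⟩ := ha.1
    have hfirst : a - 1 ∉ middles x := fun ha' ↦
      (sub_one_lt a).not_ge (ha.2 ⟨ha', (sub_one_lt a).le.trans hac⟩)
    have hstart := h.sum_sub_edgeTerm_nonneg hi haT (hlt a haT) hfirst
    have hrest := h.sum_weight_nonneg (.inr haT) hc hac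
    rw [leftPotential_of_isLeast ha, ← sum_Ioc_add_sum_Ioc _ (hlt a haT).le hac]
    linarith

theorem one_le_sum_add_leftPotential (h : MaximalRow n x y N) {c : ℤ} (hc : c ∈ marks x N) :
    1 ≤ ∑ j ∈ Finset.Ioc 0 c, weight x N j + leftPotential (N ∩ Iic c) x
      - leftPotential (middles x ∩ Iic c) y := by
  obtain ⟨a, ha⟩ := (bddBelow_Ioo.mono h.marks_subset_Ioo).exists_isLeast_of_nonempty ⟨c, hc⟩
  have hac : a ≤ c := ha.2 hc
  have hfirst : ∀ j ∈ Ioo 0 a, j ∉ marks x N := fun j hj hjm ↦ (ha.2 hjm).not_gt hj.2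
  rw [← sum_Ioc_add_sum_Ioc _ (zero_le_one.trans (h.marks_subset_Ioo ha.1).1.le) hac]
  rcases ha.1 with haN | haT
  · have haN' : IsLeast (N ∩ Iic c) a := ⟨⟨haN, hac⟩, fun b hb ↦ ha.2 (.inl hb.1)⟩
    have hlt : ∀ k ∈ middles x, a < k := fun k hk ↦
      (ha.2 (.inr hk)).lt_of_ne fun e ↦ h.notMem_of_mem_shaded haN (e ▸ hk.2.1)
    rw [leftPotential_of_isLeast haN']
    linarith [h.one_le_sum_add_edgeTerm haN hfirst, h.sum_sub_leftPotential_nonneg ha.1 hc hac hlt]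
  · have haT' : IsLeast (middles x ∩ Iic c) a := ⟨⟨haT, hac⟩, fun b hb ↦ ha.2 (.inr hb.1)⟩
    have hlt : ∀ k ∈ N, a < k := fun k hk ↦
      (ha.2 (.inl hk)).lt_of_ne fun e ↦ h.notMem_of_mem_shaded hk (e ▸ haT.2.1)
    rw [leftPotential_of_isLeast haT']
    linarith [h.one_le_sum_sub_edgeTerm haT hfirst, h.sum_add_leftPotential_nonneg ha.1 hc hac hlt]

end MaximalRow

end Edges

section Mirror

theorem mem_mirror {k : ℤ} : k ∈ mirror n x ↔ n + 1 - k ∈ x := Iff.rfl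

theorem mirror_mirror (n : ℤ) (x : Set ℤ) : mirror n (mirror n x) = x := by
  ext k; simp [mem_mirror]

theorem middles_mirror (n : ℤ) (x : Set ℤ) : middles (mirror n x) = mirror n (middles x) := by
  ext k
  simp only [middles, mirror, mem_ofPred_eq]
  grind

theorem marks_mirror (n : ℤ) (x N : Set ℤ) :
    marks (mirror n x) (mirror n N) = mirror n (marks x N) := by
  rw [marks, middles_mirror]; rfl

theorem mirror_inter_Iic (n c : ℤ) (M : Set ℤ) :
    mirror n M ∩ Iic (n + 1 - c) = mirror n (M ∩ Ici c) := by
  ext k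
  simp only [mirror, mem_inter_iff, mem_Iic, mem_Ici, mem_ofPred_eq]
  grind

theorem weight_mirror (n : ℤ) (x N : Set ℤ) (k : ℤ) :
    weight (mirror n x) (mirror n N) k = weight x N (n + 1 - k) := by
  have hmem : k ∈ marks (mirror n x) (mirror n N) ↔ n + 1 - k ∈ marks x N := by
    rw [marks_mirror, mem_mirror]
  classical exact if_congr hmem rfl (if_congr Iff.rfl rfl rfl)

theorem sum_weight_mirror (n : ℤ) (x N : Set ℤ) (a b : ℤ) :
    ∑ k ∈ Finset.Ioc a b, weight (mirror n x) (mirror n N) k =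
      ∑ k ∈ Finset.Ioc (n - b) (n - a), weight x N k := by
  simp only [weight_mirror, sum_Ioc_reflect]

/-- The counterpart of `leftPotential` at the eastern border. -/
noncomputable def rightPotential (n : ℤ) (M z : Set ℤ) : ℤ :=
  leftPotential (mirror n M) (mirror n z)

theorem isLeast_mirror {M : Set ℤ} {b : ℤ} (hb : IsGreatest M b) :
    IsLeast (mirror n M) (n + 1 - b) :=
  ⟨by simpa [mem_mirror] using hb.1, fun k hk ↦ by have := hb.2 hk; lia⟩

theorem rightPotential_of_isGreatest {M z : Set ℤ} {b : ℤ} (hb : IsGreatest M b) :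
    rightPotential n M z = edgeTerm (mirror n z) (n + 1 - b) :=
  leftPotential_of_isLeast (isLeast_mirror hb)

theorem rightPotential_empty (n : ℤ) (z : Set ℤ) : rightPotential n ∅ z = 0 :=
  leftPotential_empty _

namespace MaximalRow

protected theorem mirror (h : MaximalRow n x y N) :
    MaximalRow n (mirror n x) (mirror n y) (mirror n N) where
  subset_Icc k hk := by have := h.subset_Icc hk; simp only [mem_Icc] at *; lia
  shaded_subset_Ioo k hk := by have := h.shaded_subset_Ioo hk; simp only [mem_Ioo] at *; lia
  disjoint := h.disjoint.preimage _
  empty_lot k hk hx hN := by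
    have := h.empty_lot (n + 1 - k) (by simp only [mem_Icc] at *; lia) hx hN
    simp only [mem_mirror]
    grind

theorem one_le_sum_add_rightPotential (h : MaximalRow n x y N) {c : ℤ} (hc : c ∈ marks x N) :
    1 ≤ ∑ j ∈ Finset.Ioc c n, weight x N j + rightPotential n (N ∩ Ici c) x
      - rightPotential n (middles x ∩ Ici c) y := by
  have hc' : n + 1 - c ∈ marks (mirror n x) (mirror n N) := by
    rw [marks_mirror]; simpa [mem_mirror] using hc
  have hcn := (h.marks_subset_Ioo hc).2
  have hleft := h.mirror.one_le_sum_add_leftPotential hc'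
  rw [middles_mirror, mirror_inter_Iic, mirror_inter_Iic,
    ← sum_weight_sub_one hc' (by lia), sum_weight_mirror] at hleft
  have e : n - (n + 1 - c - 1) = c := by ring
  rwa [e, sub_zero] at hleft

end MaximalRow

end Mirror

section RowInequality

/-- The total weight which a row `z` with set of shaded lots `M` receives from the row to its north
at the two borders. -/
noncomputable def edgePotential (n : ℤ) (M z : Set ℤ) : ℤ :=
  leftPotential M z + rightPotential n M z

theorem edgePotential_empty (n : ℤ) (z : Set ℤ) : edgePotential n ∅ z = 0 := by
  simp [edgePotential, leftPotential_empty, rightPotential_empty]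

theorem edgePotential_mirror (n : ℤ) (M z : Set ℤ) :
    edgePotential n (mirror n M) (mirror n z) = edgePotential n M z := by
  simp [edgePotential, rightPotential, mirror_mirror, add_comm]

theorem neg_two_le_edgePotential (n : ℤ) (M z : Set ℤ) : -2 ≤ edgePotential n M z := by
  have hl := (abs_le.1 (abs_leftPotential_le_one M z)).1
  have hr := (abs_le.1 (abs_leftPotential_le_one (mirror n M) (mirror n z))).1
  unfold edgePotential rightPotential
  linarith

theorem leftPotential_inter_Iic {M z : Set ℤ} {k c : ℤ} (hM : BddBelow M) (hk : k ∈ M)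
    (hkc : k ≤ c) : leftPotential (M ∩ Iic c) z = leftPotential M z := by
  obtain ⟨a, ha⟩ := hM.exists_isLeast_of_nonempty ⟨k, hk⟩
  rw [leftPotential_of_isLeast ha,
    leftPotential_of_isLeast (isLeast_inter_Iic ha ((ha.2 hk).trans hkc))]

theorem rightPotential_inter_Ici {M z : Set ℤ} {k c : ℤ} (hM : BddAbove M) (hk : k ∈ M)
    (hck : c ≤ k) : rightPotential n (M ∩ Ici c) z = rightPotential n M z := by
  obtain ⟨b, hb⟩ := hM.exists_isGreatest_of_nonempty ⟨k, hk⟩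
  have hbc : n + 1 - b ≤ n + 1 - c := by linarith [hb.2 hk]
  rw [rightPotential, ← mirror_inter_Iic, rightPotential,
    leftPotential_of_isLeast (isLeast_inter_Iic (isLeast_mirror hb) hbc),
    leftPotential_of_isLeast (isLeast_mirror hb)]

theorem edgePotential_cut {M z : Set ℤ} {c : ℤ} (hl : BddBelow M) (hr : BddAbove M)
    (hc : M = ∅ ∨ (∃ k ∈ M, k ≤ c) ∧ ∃ k ∈ M, c ≤ k) :
    leftPotential (M ∩ Iic c) z + rightPotential n (M ∩ Ici c) z = edgePotential n M z := by
  rcases hc with rfl | ⟨⟨a, ha, hac⟩, b, hb, hcb⟩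
  · simp [edgePotential]
  · rw [leftPotential_inter_Iic hl ha hac, rightPotential_inter_Ici hr hb hcb, edgePotential]

namespace MaximalRow

theorem two_le_sum_add_edgePotential (h : MaximalRow n x y N) {c : ℤ} (hc : c ∈ marks x N)
    (hN : N = ∅ ∨ (∃ k ∈ N, k ≤ c) ∧ ∃ k ∈ N, c ≤ k)
    (hT : middles x = ∅ ∨ (∃ k ∈ middles x, k ≤ c) ∧ ∃ k ∈ middles x, c ≤ k) :
    2 ≤ ∑ j ∈ Finset.Ioc 0 n, weight x N j + edgePotential n N x
      - edgePotential n (middles x) y := by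
  obtain ⟨hc₁, hcn⟩ := h.marks_subset_Ioo hc
  have hleft := h.one_le_sum_add_leftPotential hc
  have hright := h.one_le_sum_add_rightPotential hc
  rw [← edgePotential_cut h.bddBelow_shaded h.bddAbove_shaded hN,
    ← edgePotential_cut h.bddBelow_middles h.bddAbove_middles hT,
    ← sum_Ioc_add_sum_Ioc _ (zero_le_one.trans hc₁.le) hcn.le]
  linarith

theorem sum_gap (h : MaximalRow n x y N) {b t : ℤ} (hb : b ∈ N) (ht : t ∈ middles x)
    (hbt : b < t) (hgap : ∀ j ∈ Ioo b t, j ∉ marks x N) :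
    -1 - phase n ≤ ∑ j ∈ Finset.Ioc b t, weight x N j + edgeTerm (mirror n x) (n + 1 - b)
      - edgeTerm y t := by
  have hb₁ := (h.shaded_subset_Ioo hb).1
  have htn := (h.middles_subset_Ioo ht).2
  have hbx := h.notMem_of_mem_shaded hb
  have hfloor := h.phasedFloor_le_sum_weight (k := t - 1) (by lia) hbx (by lia) (by lia)
    fun j hj ↦ hgap j ⟨hj.1, Int.lt_of_le_sub_one hj.2⟩
  rw [sum_weight_sub_one (.inr ht) hbt] at hfloor
  obtain ⟨htw, htx, -⟩ := ht
  have hbt' : b < t - 1 := (Int.le_sub_one_of_lt hbt).lt_of_ne fun e ↦ hbx (e ▸ htw)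
  have hmark := hgap (t - 1) ⟨hbt', by lia⟩
  have hright := min_zero_phase_le_edgeTerm (mirror n x) (n + 1 - b)
  rw [show n + 1 - b - 1 = n - b by ring] at hright
  have hmin := neg_one_sub_phase_le_sub_min n b (t - 1)
  have hmax := neg_one_sub_phase_le_sub_max n b (t - 1)
  simp only [phasedFloor, edgeTerm, marks, middles, mem_union, mem_ofPred_eq, sub_add_cancel,
    htw, htx] at hfloor hmark ⊢
  grind

theorem one_sub_phase_le_of_shaded_lt_middles (h : MaximalRow n x y N) (hN : N.Nonempty)
    (hT : (middles x).Nonempty) (hlt : ∀ b ∈ N, ∀ t ∈ middles x, b < t) :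
    1 - phase n ≤ ∑ j ∈ Finset.Ioc 0 n, weight x N j + edgePotential n N x
      - edgePotential n (middles x) y := by
  obtain ⟨b, hb⟩ := h.bddAbove_shaded.exists_isGreatest_of_nonempty hN
  obtain ⟨t, ht⟩ := h.bddBelow_middles.exists_isLeast_of_nonempty hT
  have hbt := hlt b hb.1 t ht.1
  obtain ⟨hb₁, hbn⟩ := h.shaded_subset_Ioo hb.1
  have htn := (h.middles_subset_Ioo ht.1).2
  have hleft := h.one_le_sum_add_leftPotential (.inl hb.1)
  have hright := h.one_le_sum_add_rightPotential (.inr ht.1)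
  have hgap := h.sum_gap hb.1 ht.1 hbt fun j hj hjm ↦
    hjm.elim (fun hjN ↦ (hb.2 hjN).not_gt hj.1) fun hjT ↦ (ht.2 hjT).not_gt hj.2
  have hTb : middles x ∩ Iic b = ∅ :=
    eq_empty_of_forall_notMem fun k hk ↦ (hlt b hb.1 k hk.1).not_ge hk.2
  have hNt : N ∩ Ici t = ∅ :=
    eq_empty_of_forall_notMem fun k hk ↦ (hlt k hk.1 t ht.1).not_ge hk.2
  rw [hTb, leftPotential_empty, leftPotential_inter_Iic h.bddBelow_shaded hb.1 le_rfl] at hleft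
  rw [hNt, rightPotential_empty, rightPotential_inter_Ici h.bddAbove_middles ht.1 le_rfl] at hright
  rw [edgePotential, edgePotential, leftPotential_of_isLeast ht, rightPotential_of_isGreatest hb,
    ← sum_Ioc_add_sum_Ioc _ (zero_le_one.trans hb₁.le) hbn.le,
    ← sum_Ioc_add_sum_Ioc _ hbt.le htn.le]
  linarith

theorem one_sub_phase_le_of_middles_lt_shaded (h : MaximalRow n x y N) (hN : N.Nonempty)
    (hT : (middles x).Nonempty) (hlt : ∀ b ∈ N, ∀ t ∈ middles x, t < b) :
    1 - phase n ≤ ∑ j ∈ Finset.Ioc 0 n, weight x N j + edgePotential n N x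
      - edgePotential n (middles x) y := by
  have hmirror := h.mirror.one_sub_phase_le_of_shaded_lt_middles
  rw [middles_mirror, edgePotential_mirror, edgePotential_mirror, sum_weight_mirror, sub_self,
    sub_zero] at hmirror
  refine hmirror ?_ ?_ fun b hb t ht ↦ ?_
  · exact hN.imp' (n + 1 - ·) fun k hk ↦ by simpa [mem_mirror] using hk
  · exact hT.imp' (n + 1 - ·) fun k hk ↦ by simpa [mem_mirror] using hk
  · have := hlt _ hb _ ht
    linarith

theorem one_sub_phase_le_sum_add_edgePotential (h : MaximalRow n x y N) (hn : 0 ≤ n) :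
    1 - phase n ≤ ∑ j ∈ Finset.Ioc 0 n, weight x N j + edgePotential n N x
      - edgePotential n (middles x) y := by
  have hle : 1 - phase n ≤ 2 := by linarith [(abs_le.1 (abs_phase_le_one n)).1]
  rcases N.eq_empty_or_nonempty with hN | hN <;>
    rcases (middles x).eq_empty_or_nonempty with hT | hT
  · rw [hN, hT, edgePotential_empty, edgePotential_empty, add_zero, sub_zero]
    exact hN ▸ h.one_sub_phase_le_sum_weight hn (by simp [marks, hN, hT])
  · obtain ⟨t, ht⟩ := hT
    exact hle.trans (h.two_le_sum_add_edgePotential (.inr ht) (.inl hN)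
      (.inr ⟨⟨t, ht, le_rfl⟩, t, ht, le_rfl⟩))
  · obtain ⟨b, hb⟩ := hN
    exact hle.trans (h.two_le_sum_add_edgePotential (.inl hb)
      (.inr ⟨⟨b, hb, le_rfl⟩, b, hb, le_rfl⟩) (.inl hT))
  by_cases hNT : ∀ b ∈ N, ∀ t ∈ middles x, b < t
  · exact h.one_sub_phase_le_of_shaded_lt_middles hN hT hNT
  by_cases hTN : ∀ b ∈ N, ∀ t ∈ middles x, t < b
  · exact h.one_sub_phase_le_of_middles_lt_shaded hN hT hTN
  obtain ⟨c, hc, hcN, hcT⟩ : ∃ c ∈ marks x N, ((∃ k ∈ N, k ≤ c) ∧ ∃ k ∈ N, c ≤ k) ∧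
      (∃ k ∈ middles x, k ≤ c) ∧ ∃ k ∈ middles x, c ≤ k := by
    push Not at hNT hTN
    obtain ⟨b, hb, t, ht, htb⟩ := hNT
    obtain ⟨b', hb', t', ht', hbt'⟩ := hTN
    rcases le_total t b' with h₁ | h₁
    · exact ⟨b', .inl hb', ⟨⟨b', hb', le_rfl⟩, b', hb', le_rfl⟩, ⟨t, ht, h₁⟩, t', ht', hbt'⟩
    · exact ⟨t, .inr ht, ⟨⟨b', hb', h₁⟩, b, hb, htb⟩, ⟨t, ht, le_rfl⟩, t, ht, le_rfl⟩
  exact hle.trans (h.two_le_sum_add_edgePotential hc (.inr hcN) (.inr hcT))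

end MaximalRow

end RowInequality

section Counting

theorem sum_indicator_one {M : Set ℤ} (hM : M ⊆ Icc 1 n) :
    ∑ k ∈ Finset.Ioc 0 n, M.indicator 1 k = (M.ncard : ℤ) := by
  classical
  have hset : M = ((Finset.Ioc 0 n).filter (· ∈ M) : Finset ℤ) := by
    ext k
    have := @hM k
    simp only [mem_Icc, Finset.coe_filter, Finset.mem_Ioc, mem_ofPred_eq] at *
    grind
  conv_rhs => rw [hset, Set.ncard_coe_finset]
  simp [Set.indicator_apply]

namespace MaximalRow

theorem weight_eq (h : MaximalRow n x y N) (k : ℤ) :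
    weight x N k =
      2 * x.indicator 1 k - 1 + N.indicator 1 k - (middles x).indicator 1 k := by
  have hT : k ∈ middles x → k ∈ x := fun hk ↦ hk.2.1
  have hN : k ∈ N → k ∉ x := h.notMem_of_mem_shaded
  by_cases hkx : k ∈ x <;> by_cases hkN : k ∈ N <;> by_cases hkT : k ∈ middles x <;>
    simp_all [weight, marks]

theorem sum_weight_eq (h : MaximalRow n x y N) (hn : 0 ≤ n) :
    ∑ k ∈ Finset.Ioc 0 n, weight x N k =
      2 * x.ncard - n + N.ncard - (middles x).ncard := by
  simp only [h.weight_eq, Finset.sum_sub_distrib, Finset.sum_add_distrib, ← Finset.mul_sum,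
    sum_indicator_one h.subset_Icc,
    sum_indicator_one (h.shaded_subset_Ioo.trans Ioo_subset_Icc_self),
    sum_indicator_one (h.middles_subset_Ioo.trans Ioo_subset_Icc_self)]
  simp [hn]

theorem finite (h : MaximalRow n x y N) : x.Finite := (finite_Icc 1 n).subset h.subset_Icc

theorem nontrivial (h : MaximalRow n x y N) (hn : 2 ≤ n) : x.Nontrivial := by
  have hsub : ∀ k ∈ x, 1 ≤ k ∧ k ≤ n := fun k hk ↦ h.subset_Icc hk
  have hNsub : ∀ k ∈ N, 1 < k ∧ k < n := fun k hk ↦ h.shaded_subset_Ioo hk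
  have hwest : 1 ∈ x ∨ 2 ∈ x ∧ 3 ∈ x := by
    have := h.empty_lot 1 ⟨le_rfl, by lia⟩
    grind
  have heast : n ∈ x ∨ n - 1 ∈ x ∧ n - 2 ∈ x := by
    have := h.empty_lot n ⟨by lia, le_rfl⟩
    grind
  rcases hwest with h₁ | ⟨h₂, h₃⟩
  · rcases heast with hn₀ | ⟨hn₁, hn₂⟩
    · exact ⟨1, h₁, n, hn₀, by lia⟩
    · exact ⟨n - 1, hn₁, n - 2, hn₂, by lia⟩
  · exact ⟨2, h₂, 3, h₃, by lia⟩

theorem ncard_middles_add_two_le (h : MaximalRow n x y N) (hn : 2 ≤ n) :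
    (middles x).ncard + 2 ≤ x.ncard := by
  obtain ⟨a, ha⟩ := (bddBelow_Icc.mono h.subset_Icc).exists_isLeast_of_nonempty
    (h.nontrivial hn).nonempty
  obtain ⟨b, hb⟩ := (bddAbove_Icc.mono h.subset_Icc).exists_isGreatest_of_nonempty
    (h.nontrivial hn).nonempty
  have hab : a ≠ b := by
    rintro rfl
    exact (h.nontrivial hn).not_subsingleton fun c hc d hd ↦
      ((hb.2 hc).antisymm (ha.2 hc)).trans ((hb.2 hd).antisymm (ha.2 hd)).symm
  have hends : {a, b} ⊆ x \ middles x := by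
    rintro k (rfl | rfl)
    · exact ⟨ha.1, fun hk ↦ (sub_one_lt k).not_ge (ha.2 hk.1)⟩
    · exact ⟨hb.1, fun hk ↦ (lt_add_one k).not_ge (hb.2 hk.2.2)⟩
  have hcard := ncard_le_ncard hends h.finite.sdiff
  rw [ncard_pair hab] at hcard
  have := ncard_sdiff_add_ncard_of_subset (fun k (hk : k ∈ middles x) ↦ hk.2.1) h.finite
  lia

theorem le_ncard_add_ncard (h : MaximalRow n x ∅ N) : n ≤ x.ncard + N.ncard := by
  have hcover : Icc 1 n ⊆ x ∪ N := fun k hk ↦ by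
    by_contra hxN
    rw [mem_union, not_or] at hxN
    simpa using h.empty_lot k hk hxN.1 hxN.2
  have hfin : (x ∪ N).Finite := h.finite.union ((finite_Ioo 1 n).subset h.shaded_subset_Ioo)
  have hle := (ncard_le_ncard hcover hfin).trans (ncard_union_le x N)
  rw [← Finset.coe_Icc, ncard_coe_finset, Int.card_Icc] at hle
  lia

end MaximalRow

end Counting

end Rows

section Configurations

/-- The occupied lots of row `i`. All occupied lots have positive column numbers, so `Int.toNat`
does not create spurious occupied lots at the nonpositive integers. -/
def row (C : Finset (ℕ × ℕ)) (i : ℕ) : Set ℤ := {j | (i, j.toNat) ∈ C}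

variable {m n : ℕ} {C : Finset (ℕ × ℕ)}

theorem mem_row {i : ℕ} {j : ℤ} : j ∈ row C i ↔ (i, j.toNat) ∈ C := Iff.rfl

theorem mem_grid {i j : ℕ} : (i, j) ∈ Grid m n ↔ (1 ≤ i ∧ i ≤ m) ∧ 1 ≤ j ∧ j ≤ n := by
  simp [Grid]

theorem row_subset_Icc (hC : C ⊆ Grid m n) (i : ℕ) : row C i ⊆ Icc 1 n := fun j hj ↦ by
  have := (mem_grid.1 (hC hj)).2
  simp only [mem_Icc]
  lia

theorem row_eq_empty (hC : C ⊆ Grid m n) {i : ℕ} (hi : i = 0 ∨ m < i) : row C i = ∅ :=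
  eq_empty_of_forall_notMem fun j hj ↦ by
    have := (mem_grid.1 (hC hj)).1
    lia

theorem card_eq_sum_ncard_row (hC : C ⊆ Grid m n) :
    C.card = ∑ i ∈ Finset.Icc 1 m, (row C i).ncard := by
  have hmap : ∀ p ∈ C, p.1 ∈ Finset.Icc 1 m := fun p hp ↦
    Finset.mem_Icc.2 (mem_grid.1 (hC hp)).1
  rw [Finset.card_eq_sum_card_fiberwise hmap]
  refine Finset.sum_congr rfl fun i _ ↦ ?_
  rw [← Set.ncard_coe_finset]
  refine ncard_congr (fun p _ ↦ (p.2 : ℤ)) ?_ ?_ ?_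
  · rintro ⟨_, j⟩ hp
    obtain ⟨hpC, rfl⟩ := Finset.mem_filter.1 hp
    simpa [mem_row] using hpC
  · rintro ⟨_, j⟩ ⟨_, j'⟩ hp hp'
    simp_all
  · intro j hj
    have := (row_subset_Icc hC i hj).1
    exact ⟨(i, j.toNat), by simpa using mem_row.1 hj, Int.toNat_of_nonneg (by lia)⟩

theorem exists_blocked_insert (hC : MaximalConfig m n C) {p : ℕ × ℕ} (hp : p ∈ Grid m n)
    (hpC : p ∉ C) : ∃ q ∈ insert p C, Blocked (insert p C) q := by
  by_contra! hfree
  have hperm : Permissible m n (insert p C) := ⟨Finset.insert_subset hp hC.1.1, hfree⟩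
  exact hpC (hC.2 _ hperm (Finset.subset_insert p C) ▸ Finset.mem_insert_self p C)

theorem empty_lot_of_maximal (hC : MaximalConfig m n C) {i j : ℕ}
    (hij : (i + 1, j) ∈ Grid m n) (hijC : (i + 1, j) ∉ C) :
    ((i + 1, j - 1) ∈ C ∧ (i + 1, j + 1) ∈ C ∧ (i + 2, j) ∈ C) ∨
      ((i + 1, j - 2) ∈ C ∧ (i + 1, j - 1) ∈ C ∧ (i + 2, j - 1) ∈ C) ∨
      ((i + 1, j + 2) ∈ C ∧ (i + 1, j + 1) ∈ C ∧ (i + 2, j + 1) ∈ C) ∨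
      ((i, j - 1) ∈ C ∧ (i, j) ∈ C ∧ (i, j + 1) ∈ C) := by
  obtain ⟨⟨a, b⟩, hab, hE, hW, hS⟩ := exists_blocked_insert hC hij hijC
  have hj := (mem_grid.1 hij).2.1
  simp only [Finset.mem_insert, Prod.mk.injEq] at hab hE hW hS
  by_cases hsouth : a + 1 = i + 1 ∧ b = j
  · obtain rfl : a = i := by lia
    obtain rfl := hsouth.2
    grind
  rcases hab with ⟨rfl, rfl⟩ | hab
  · grind
  have hb := (mem_grid.1 (hC.1.1 hab)).2.1
  rcases hE with ⟨rfl, rfl⟩ | hE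
  · grind
  rcases hW with ⟨rfl, hW⟩ | hW
  · obtain rfl : b = j + 1 := by lia
    grind
  exact absurd ⟨hE, hW, hS.resolve_left hsouth⟩ (hC.1.2 (a, b) hab)

theorem disjoint_row_middles (hC : Permissible m n C) (i : ℕ) :
    Disjoint (row C (i + 1)) (middles (row C i)) :=
  disjoint_left.2 fun j hj hmid ↦ by
    have := (row_subset_Icc hC.1 _ hj).1
    refine hC.2 (i, j.toNat) hmid.2.1 ⟨?_, ?_, hj⟩
    · simpa [show (j + 1).toNat = j.toNat + 1 by lia] using mem_row.1 hmid.2.2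
    · simpa [show (j - 1).toNat = j.toNat - 1 by lia] using mem_row.1 hmid.1

theorem maximalRow (hC : MaximalConfig m n C) {i : ℕ} (hi : i < m) :
    MaximalRow n (row C (i + 1)) (row C (i + 2)) (middles (row C i)) where
  subset_Icc := row_subset_Icc hC.1.1 _
  shaded_subset_Ioo j hj := by
    have := row_subset_Icc hC.1.1 _ hj.1
    have := row_subset_Icc hC.1.1 _ hj.2.2
    simp only [mem_Icc, mem_Ioo] at *
    lia
  disjoint := disjoint_row_middles hC.1 i
  empty_lot j hj hrow hmid := by
    obtain ⟨hj₁, hjn⟩ := hj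
    lift j to ℕ using by lia
    have hij : (i + 1, j) ∈ Grid m n := mem_grid.2 (by lia)
    have hempty := empty_lot_of_maximal hC hij hrow
    simp only [middles, mem_row, mem_ofPred_eq, show ((j : ℤ) - 1).toNat = j - 1 by lia,
      show ((j : ℤ) - 2).toNat = j - 2 by lia, show ((j : ℤ) + 1).toNat = j + 1 by lia,
      show ((j : ℤ) + 2).toNat = j + 2 by lia, Int.toNat_natCast] at hmid ⊢
    grind

end Configurations

section Occupancy

variable {m n : ℕ} {C : Finset (ℕ × ℕ)}

theorem mul_add_edgePotential_le_two_mul_sum_ncard_row (hC : MaximalConfig m n C) {q : ℕ}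
    (hq : q ≤ m) :
    q * (n + 1 - phase n) + (middles (row C q)).ncard
        + edgePotential n (middles (row C q)) (row C (q + 1)) ≤
      2 * ∑ i ∈ Finset.Icc 1 q, ((row C i).ncard : ℤ) := by
  induction q with
  | zero =>
    have hmiddles : middles (row C 0) = ∅ := by simp [row_eq_empty hC.1.1 (.inl rfl), middles]
    simp [hmiddles, edgePotential_empty]
  | succ q ih =>
    have hrow := maximalRow hC hq
    have hweight := hrow.one_sub_phase_le_sum_add_edgePotential n.cast_nonneg
    rw [hrow.sum_weight_eq n.cast_nonneg] at hweight
    rw [Finset.sum_Icc_succ_top (by lia)]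
    push_cast
    linarith [ih (Nat.le_of_succ_le hq)]

theorem neg_one_le_ncard_add_edgePotential {n : ℤ} {M : Set ℤ} (hM : M.Finite) (z : Set ℤ) :
    -1 ≤ M.ncard + edgePotential n M z := by
  rcases M.eq_empty_or_nonempty with rfl | hne
  · simp [edgePotential_empty]
  · have := (ncard_pos hM).2 hne
    have := neg_two_le_edgePotential n M z
    lia

theorem mul_le_two_mul_sum_ncard_row (hC : MaximalConfig m n C) {q : ℕ} (hq : q ≤ m) :
    q * (n + 1 - phase n) ≤ 2 * ∑ i ∈ Finset.Icc 1 q, ((row C i).ncard : ℤ) := by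
  have hfin : (middles (row C q)).Finite :=
    (finite_Icc 1 (n : ℤ)).subset fun _ hk ↦ row_subset_Icc hC.1.1 q hk.2.1
  have hsum := mul_add_edgePotential_le_two_mul_sum_ncard_row hC hq
  have hborder := neg_one_le_ncard_add_edgePotential (n := n) hfin (row C (q + 1))
  obtain ⟨r, hr⟩ := (even_add_one_sub_phase n).mul_left q
  lia

theorem add_two_le_ncard_last_two_rows (hC : MaximalConfig (m + 2) n C) (hn : 2 ≤ n) :
    n + 2 ≤ (row C (m + 1)).ncard + (row C (m + 2)).ncard := by
  have hsouth : row C (m + 3) = ∅ := row_eq_empty hC.1.1 (.inr (by lia))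
  have hpenult := (maximalRow hC (i := m) (by lia)).ncard_middles_add_two_le (by lia)
  have hlast := (hsouth ▸ maximalRow hC (i := m + 1) (by lia)).le_ncard_add_ncard
  lia

theorem le_two_mul_card (hC : MaximalConfig (m + 2) n C) (hn : 2 ≤ n) :
    m * (n + 1 - phase n) + 2 * n + 4 ≤ 2 * C.card := by
  have hrows := mul_le_two_mul_sum_ncard_row hC (Nat.le_add_right m 2)
  have hlast := add_two_le_ncard_last_two_rows hC hn
  have hcard := card_eq_sum_ncard_row hC.1.1
  rw [Finset.sum_Icc_succ_top (by lia), Finset.sum_Icc_succ_top (by lia)] at hcard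
  zify at hlast hcard
  linarith

end Occupancy

end SunlitGrid

/-- Sharp lower bound on the occupancy of maximal configurations:
if n ≡ 0 (mod 4) then |C| ≥ mn/2 + 2, if n ≡ 2 (mod 4) then |C| ≥ m(n+2)/2,
and if n is odd then |C| ≥ m(n+1)/2 + 1 (stated multiplied out by 2, all the
expressions being integers under the stated congruences). -/
theorem sharp_lower_bound (m n : ℕ) (hm : 2 ≤ m) (hn : 2 ≤ n)
    (C : Finset (ℕ × ℕ)) (hC : MaximalConfig m n C) :
    (n % 4 = 0 → m * n + 4 ≤ 2 * C.card) ∧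
    (n % 4 = 2 → m * (n + 2) ≤ 2 * C.card) ∧
    (n % 2 = 1 → m * (n + 1) + 2 ≤ 2 * C.card) := by
  obtain ⟨m, rfl⟩ := Nat.exists_eq_add_of_le' hm
  have hcard := SunlitGrid.le_two_mul_card hC hn
  refine ⟨fun hmod ↦ ?_, fun hmod ↦ ?_, fun hmod ↦ ?_⟩ <;> zify
  · rw [SunlitGrid.phase_of_emod_four_eq_zero (by lia)] at hcard
    linarith
  · rw [SunlitGrid.phase_of_emod_four_eq_two (by lia)] at hcard
    linarith
  · rw [SunlitGrid.phase_of_emod_two_eq_one (by lia)] at hcard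
    linarith
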